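/- Let F be a Ferrers diagram of semiperimeter n+1 and let c' ∈ Rec(G(F)) with CanonTop(c') = (U^0, V^1, U^1, …). Define the configuration c = minrec(c') by: c_j = |{ℓ ∈ V^k : j < ℓ and k > i}| if j ∈ U^i, and c_j = |{ℓ ∈ U^k : ℓ < j and k ≥ i}| if j ∈ V^i. Then c is a minimal recurrent configuration on G(F) (i.e., c ∈ Rec_min(G(F))) and CanonTop(c) = CanonTop(c'). -/

import Mathlib

open Classical

/-- A Ferrers diagram of semiperimeter `n + 1`, encoded by the set of its row labels
(labels `0, …, n` run along the south-east border; `0` labels the top row and the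
last label `n` is a column label). -/
structure Ferrers (n : ℕ) where
  rows : Finset (Fin (n + 1))
  zero_mem : 0 ∈ rows
  last_not_mem : Fin.last n ∉ rows

namespace Ferrers

/-- `(i, j)` is a cell of the diagram: `i` is a row label, `j` a column label, `i < j`. -/
def Cell {n : ℕ} (F : Ferrers n) (i j : Fin (n + 1)) : Prop :=
  i ∈ F.rows ∧ j ∉ F.rows ∧ i < j

/-- Adjacency in the Ferrers graph `G(F)`. -/
def Adj {n : ℕ} (F : Ferrers n) (u v : Fin (n + 1)) : Prop :=
  F.Cell u v ∨ F.Cell v u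

/-- Degree of a vertex in `G(F)`. -/
noncomputable def deg {n : ℕ} (F : Ferrers n) (v : Fin (n + 1)) : ℕ :=
  {u | F.Adj v u}.ncard

/-- Toppling a single vertex.  The height at the sink `0` is kept equal to `c 0`
(grains sent to the sink vanish); toppling the sink sends one grain to each of
its neighbours. -/
noncomputable def topple {n : ℕ} (F : Ferrers n) (c : Fin (n + 1) → ℕ)
    (v : Fin (n + 1)) : Fin (n + 1) → ℕ :=
  fun u =>
    if u = 0 then c 0
    else if u = v then c v - F.deg v
    else if F.Adj v u then c u + 1
    else c u

/-- Toppling the vertices of a list in order. -/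
noncomputable def toppleList {n : ℕ} (F : Ferrers n) (c : Fin (n + 1) → ℕ)
    (l : List (Fin (n + 1))) : Fin (n + 1) → ℕ :=
  l.foldl F.topple c

/-- Simultaneous toppling of a set of vertices. -/
noncomputable def toppleSet {n : ℕ} (F : Ferrers n) (c : Fin (n + 1) → ℕ)
    (S : Set (Fin (n + 1))) : Fin (n + 1) → ℕ :=
  fun u =>
    if u = 0 then c 0
    else c u + {w ∈ S | F.Adj w u}.ncard - if u ∈ S then F.deg u else 0

/-- A configuration is stable if every non-sink vertex has fewer grains than its degree. -/
def Stable {n : ℕ} (F : Ferrers n) (c : Fin (n + 1) → ℕ) : Prop :=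
  ∀ v, v ≠ 0 → c v < F.deg v

/-- A Dhar (burning) ordering for `c`: an ordering `v₀ = 0, v₁, …, vₙ` of all the
vertices such that each `vᵢ` (`i ≥ 1`) is unstable after toppling `v₀, …, v_{i-1}`. -/
def DharSeq {n : ℕ} (F : Ferrers n) (c : Fin (n + 1) → ℕ) (l : List (Fin (n + 1))) : Prop :=
  l.length = n + 1 ∧ l.Nodup ∧ l.head? = some 0 ∧
    ∀ i, ∀ h : i < l.length, 1 ≤ i →
      F.deg (l.get ⟨i, h⟩) ≤ F.toppleList c (l.take i) (l.get ⟨i, h⟩)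

/-- Recurrent configurations (via Dhar's criterion).  The height at the sink is
normalised to `0`. -/
def Recurrent {n : ℕ} (F : Ferrers n) (c : Fin (n + 1) → ℕ) : Prop :=
  c 0 = 0 ∧ F.Stable c ∧ ∃ l, F.DharSeq c l

/-- Minimal recurrent configurations: recurrent with minimal total number of grains. -/
def RecMin {n : ℕ} (F : Ferrers n) (c : Fin (n + 1) → ℕ) : Prop :=
  F.Recurrent c ∧ ∀ c', F.Recurrent c' → (∑ v, c v) ≤ ∑ v, c' v

/-- Canonical toppling: block `0` is `{0}` (the sink); from then on, blocks with odd
index are the sets of currently unstable column vertices and blocks with even index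
the sets of currently unstable row vertices.  The first component is the configuration
just before toppling the block recorded in the second component. -/
noncomputable def canonAux {n : ℕ} (F : Ferrers n) (c : Fin (n + 1) → ℕ) :
    ℕ → ((Fin (n + 1) → ℕ) × Set (Fin (n + 1)))
  | 0 => (c, {0})
  | k + 1 =>
    let c' := F.toppleSet (canonAux F c k).1 (canonAux F c k).2
    (c', {v | v ≠ 0 ∧ (if k % 2 = 0 then v ∉ F.rows else v ∈ F.rows) ∧ F.deg v ≤ c' v})

/-- The `k`-th block of the canonical toppling of `c`:
`canonTop F c 0 = U⁰ = {0}`, `canonTop F c (2i-1) = Vⁱ`, `canonTop F c (2i) = Uⁱ`. -/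
noncomputable def canonTop {n : ℕ} (F : Ferrers n) (c : Fin (n + 1) → ℕ) (k : ℕ) :
    Set (Fin (n + 1)) :=
  (F.canonAux c k).2

/-- The configuration just before toppling the `k`-th block of the canonical toppling. -/
noncomputable def canonConfig {n : ℕ} (F : Ferrers n) (c : Fin (n + 1) → ℕ) (k : ℕ) :
    Fin (n + 1) → ℕ :=
  (F.canonAux c k).1

/-- The index of the block of the canonical toppling of `c` containing `v`. -/
noncomputable def bIdx {n : ℕ} (F : Ferrers n) (c : Fin (n + 1) → ℕ) (v : Fin (n + 1)) : ℕ :=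
  sInf {k | v ∈ F.canonTop c k}

/-- `T` is a EW-tableau on `F` (entries of non-cells are normalised to `false`):
the top row contains only `1`s, every other row contains a `0`, and there is no
rectangle with two diagonally opposite `0`s and two `1`s in the other corners. -/
def IsEW {n : ℕ} (F : Ferrers n) (T : Fin (n + 1) → Fin (n + 1) → Bool) : Prop :=
  (∀ i j, ¬F.Cell i j → T i j = false) ∧
  (∀ j, F.Cell 0 j → T 0 j = true) ∧
  (∀ i, i ∈ F.rows → i ≠ 0 → ∃ j, F.Cell i j ∧ T i j = false) ∧
  (∀ i i' j j', F.Cell i j → F.Cell i j' → F.Cell i' j → F.Cell i' j' →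
    T i j = T i' j' → T i j' = T i' j → T i j = T i j')

/-- The configuration associated to a tableau: row vertices count the `1`s in their
row, column vertices count the `0`s in their column (the sink is normalised to `0`). -/
noncomputable def phiTC {n : ℕ} (F : Ferrers n) (T : Fin (n + 1) → Fin (n + 1) → Bool) :
    Fin (n + 1) → ℕ :=
  fun v =>
    if v = 0 then 0
    else if v ∈ F.rows then {j | F.Cell v j ∧ T v j = true}.ncard
    else {i | F.Cell i v ∧ T i v = false}.ncard

/-- The tableau associated to a (minimal recurrent) configuration: a cell `(i, j)`
gets a `1` exactly when `i` lies in an earlier block than `j` in the canonical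
toppling of `c`. -/
noncomputable def phiCT {n : ℕ} (F : Ferrers n) (c : Fin (n + 1) → ℕ) :
    Fin (n + 1) → Fin (n + 1) → Bool :=
  fun i j => if F.Cell i j ∧ F.bIdx c i < F.bIdx c j then true else false

/-- The supplementary tableau of `T`: `S i j = 1` exactly when the row vertex `i`
lies in an earlier block than the column vertex `j` in `CanonTop (φ_TC T)`. -/
noncomputable def suppS {n : ℕ} (F : Ferrers n) (T : Fin (n + 1) → Fin (n + 1) → Bool)
    (i j : Fin (n + 1)) : Bool :=
  if F.bIdx (F.phiTC T) i < F.bIdx (F.phiTC T) j then true else false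

/-- The entry of `T` in cell `(j, k)` is a cornersupport entry. -/
def Cornersupport {n : ℕ} (F : Ferrers n) (T : Fin (n + 1) → Fin (n + 1) → Bool)
    (j k : Fin (n + 1)) : Prop :=
  ∃ j' k', j' ∈ F.rows ∧ k' ∉ F.rows ∧ j' ≠ j ∧ k' ≠ k ∧
    F.suppS T j' k' = !(T j k) ∧ F.suppS T j' k = T j k ∧ F.suppS T j k' = T j k

/-- `ν_v(T)`: the number of non-cornersupport `0`s in row `v` (if `v` is a row label),
resp. non-cornersupport `1`s in column `v` (if `v` is a column label). -/
noncomputable def nu {n : ℕ} (F : Ferrers n) (T : Fin (n + 1) → Fin (n + 1) → Bool)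
    (v : Fin (n + 1)) : ℕ :=
  if v ∈ F.rows then {k | F.Cell v k ∧ T v k = false ∧ ¬F.Cornersupport T v k}.ncard
  else {i | F.Cell i v ∧ T i v = true ∧ ¬F.Cornersupport T i v}.ncard

/-- `μ_v(c)`: if `v ∈ Uⁱ`, the number of `k ∈ Vⁱ` with `k > v`; if `v ∈ Vⁱ`,
the number of `k ∈ U^{i-1}` with `k < v`.  In both cases the relevant block is the
one immediately preceding the block of `v`. -/
noncomputable def mu {n : ℕ} (F : Ferrers n) (c : Fin (n + 1) → ℕ) (v : Fin (n + 1)) : ℕ :=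
  if v ∈ F.rows then {k | v < k ∧ k ∈ F.canonTop c (F.bIdx c v - 1)}.ncard
  else {k | k < v ∧ k ∈ F.canonTop c (F.bIdx c v - 1)}.ncard

/-- The minimal recurrent configuration with the same canonical toppling as `c`:
if `j ∈ Uⁱ` then `minrec c j = |{ℓ ∈ Vᵏ : j < ℓ, k > i}|`, and if `j ∈ Vⁱ` then
`minrec c j = |{ℓ ∈ Uᵏ : ℓ < j, k ≥ i}|` (blocks `Vᵏ` sit at odd index `2k - 1`,
blocks `Uᵏ` at even index `2k`). -/
noncomputable def minrecFun {n : ℕ} (F : Ferrers n) (c : Fin (n + 1) → ℕ) :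
    Fin (n + 1) → ℕ :=
  fun j =>
    if j = 0 then 0
    else if j ∈ F.rows then
      {l | j < l ∧ ∃ k, F.bIdx c j < 2 * k + 1 ∧ l ∈ F.canonTop c (2 * k + 1)}.ncard
    else
      {l | l < j ∧ ∃ k, F.bIdx c j < 2 * k ∧ l ∈ F.canonTop c (2 * k)}.ncard

/-- The number of edges of `G(F)` (equivalently, the number of cells of `F`). -/
noncomputable def edgeCount {n : ℕ} (F : Ferrers n) : ℕ :=
  {p : Fin (n + 1) × Fin (n + 1) | F.Cell p.1 p.2}.ncard

theorem Adj.symm {n : ℕ} {F : Ferrers n} {u v : Fin (n + 1)} (h : F.Adj u v) : F.Adj v u :=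
  Or.symm h

/-- The number of neighbours of `v` lying in `S`. -/
noncomputable def degIn {n : ℕ} (F : Ferrers n) (S : Set (Fin (n + 1))) (v : Fin (n + 1)) : ℕ :=
  {w ∈ S | F.Adj w v}.ncard

theorem degIn_mono {n : ℕ} (F : Ferrers n) {S T : Set (Fin (n + 1))} {v : Fin (n + 1)}
    (h : ∀ w ∈ S, F.Adj w v → w ∈ T) : F.degIn S v ≤ F.degIn T v :=
  Set.ncard_le_ncard (fun w hw => ⟨h w hw.1 hw.2, hw.2⟩)

theorem degIn_congr {n : ℕ} (F : Ferrers n) {S T : Set (Fin (n + 1))} {v : Fin (n + 1)}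
    (h : ∀ w, F.Adj w v → (w ∈ S ↔ w ∈ T)) : F.degIn S v = F.degIn T v :=
  le_antisymm (F.degIn_mono fun w hw ha => (h w ha).1 hw)
    (F.degIn_mono fun w hw ha => (h w ha).2 hw)

theorem degIn_univ {n : ℕ} (F : Ferrers n) (v : Fin (n + 1)) : F.degIn Set.univ v = F.deg v := by
  unfold degIn deg
  congr 1
  ext w
  exact ⟨fun h => h.2.symm, fun h => ⟨trivial, Adj.symm h⟩⟩

theorem degIn_union {n : ℕ} (F : Ferrers n) {S T : Set (Fin (n + 1))} (h : Disjoint S T)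
    (v : Fin (n + 1)) : F.degIn (S ∪ T) v = F.degIn S v + F.degIn T v := by
  unfold degIn
  rw [← Set.ncard_union_eq]
  · congr 1
    ext w
    simp only [Set.mem_union, Set.mem_ofPred_eq]
    tauto
  · exact h.mono (fun w hw => hw.1) (fun w hw => hw.1)

theorem degIn_le_deg {n : ℕ} (F : Ferrers n) (S : Set (Fin (n + 1))) (v : Fin (n + 1)) :
    F.degIn S v ≤ F.deg v :=
  (F.degIn_mono fun _ _ _ => trivial).trans_eq (F.degIn_univ v)

theorem degIn_eq_sum {n : ℕ} (F : Ferrers n) (S : Set (Fin (n + 1))) (v : Fin (n + 1)) :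
    F.degIn S v = ∑ w, if w ∈ S ∧ F.Adj w v then 1 else 0 := by
  unfold degIn
  rw [Set.ncard_eq_toFinset_card', Finset.sum_boole]
  simp

/-- A rank function on the vertices that separates adjacent vertices, is minimal exactly at the
sink, and is such that each other vertex is unstable once the vertices of smaller rank have
toppled. -/
structure IsBurningRank {n : ℕ} (F : Ferrers n) (c r : Fin (n + 1) → ℕ) : Prop where
  ne_of_adj : ∀ u v, F.Adj u v → r u ≠ r v
  zero_lt : ∀ v, v ≠ 0 → r 0 < r v
  unstable : ∀ v, v ≠ 0 → F.deg v ≤ c v + F.degIn {w | r w < r v} v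

theorem degIn_lt_add_degIn_gt {n : ℕ} {F : Ferrers n} {r : Fin (n + 1) → ℕ}
    (hr : ∀ u v, F.Adj u v → r u ≠ r v) (v : Fin (n + 1)) :
    F.degIn {w | r w < r v} v + F.degIn {w | r v < r w} v = F.deg v := by
  rw [← degIn_union, ← degIn_univ]
  · refine F.degIn_congr fun w hw => ?_
    have := hr w v hw
    simp only [Set.mem_union, Set.mem_ofPred_eq, Set.mem_univ, iff_true]
    omega
  · rw [Set.disjoint_left]
    intro w h1 h2
    simp only [Set.mem_ofPred_eq] at h1 h2
    omega

theorem two_mul_sum_degIn_gt {n : ℕ} {F : Ferrers n} {r : Fin (n + 1) → ℕ}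
    (hr : ∀ u v, F.Adj u v → r u ≠ r v) :
    2 * ∑ v, F.degIn {w | r v < r w} v = ∑ v, F.deg v := by
  have hswap : ∑ v, F.degIn {w | r w < r v} v = ∑ v, F.degIn {w | r v < r w} v := by
    simp only [degIn_eq_sum, Set.mem_ofPred_eq]
    rw [Finset.sum_comm]
    refine Finset.sum_congr rfl fun v _ => Finset.sum_congr rfl fun w _ => ?_
    have : F.Adj v w ↔ F.Adj w v := ⟨Adj.symm, Adj.symm⟩
    rw [this]
  rw [← Finset.sum_congr rfl fun v _ => degIn_lt_add_degIn_gt hr v, Finset.sum_add_distrib, hswap]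
  ring

theorem degIn_gt_zero_eq_deg {n : ℕ} {F : Ferrers n} {r : Fin (n + 1) → ℕ}
    (hr : ∀ v, v ≠ 0 → r 0 < r v) : F.degIn {w | r 0 < r w} 0 = F.deg 0 := by
  rw [← degIn_univ]
  refine F.degIn_congr fun w hw => ?_
  simp only [Set.mem_ofPred_eq, Set.mem_univ, iff_true]
  apply hr
  rintro rfl
  rcases hw with hw | hw <;> exact absurd hw.2.2 (lt_irrefl _)

/-- Any configuration with a burning rank has at least `|E| - deg 0` grains. -/
theorem IsBurningRank.sum_deg_le {n : ℕ} {F : Ferrers n} {c r : Fin (n + 1) → ℕ}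
    (h : F.IsBurningRank c r) : ∑ v, F.deg v ≤ 2 * (∑ v, c v + F.deg 0) := by
  rw [← two_mul_sum_degIn_gt h.ne_of_adj, Fin.sum_univ_succ, Fin.sum_univ_succ c,
    degIn_gt_zero_eq_deg h.zero_lt]
  have : ∑ i : Fin n, F.degIn {w | r i.succ < r w} i.succ ≤ ∑ i : Fin n, c i.succ := by
    refine Finset.sum_le_sum fun i _ => ?_
    have h1 := h.unstable i.succ (Fin.succ_ne_zero i)
    have h2 := degIn_lt_add_degIn_gt h.ne_of_adj i.succ
    omega
  omega

/-- A configuration counting later neighbours has exactly `|E| - deg 0` grains. -/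
theorem sum_deg_eq {n : ℕ} {F : Ferrers n} {c r : Fin (n + 1) → ℕ} (h0 : c 0 = 0)
    (hadj : ∀ u v, F.Adj u v → r u ≠ r v) (hzero : ∀ v, v ≠ 0 → r 0 < r v)
    (hc : ∀ v, v ≠ 0 → c v = F.degIn {w | r v < r w} v) :
    ∑ v, F.deg v = 2 * (∑ v, c v + F.deg 0) := by
  rw [← two_mul_sum_degIn_gt hadj, Fin.sum_univ_succ, Fin.sum_univ_succ c,
    degIn_gt_zero_eq_deg hzero, Finset.sum_congr rfl fun i _ => hc i.succ (Fin.succ_ne_zero i), h0]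
  ring

theorem toppleList_of_not_mem {n : ℕ} (F : Ferrers n) (c : Fin (n + 1) → ℕ)
    {u : Fin (n + 1)} (hu : u ≠ 0) (l : List (Fin (n + 1))) (hl : l.Nodup) (hul : u ∉ l) :
    F.toppleList c l u = c u + F.degIn {w | w ∈ l} u := by
  induction l using List.reverseRecOn with
  | nil => simp [toppleList, degIn]
  | append_singleton l a ih =>
    obtain ⟨hla, -, hdisj⟩ := List.nodup_append.1 hl
    have hal : a ∉ l := fun h => hdisj a h a (by simp) rfl
    simp only [List.mem_append, List.mem_singleton, not_or] at hul
    have hset : {w | w ∈ l ++ [a]} = {w | w ∈ l} ∪ {a} := by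
      ext w
      simp [or_comm]
    have hsingle : F.degIn {a} u = if F.Adj a u then 1 else 0 := by
      simp [degIn_eq_sum, ite_and]
    rw [hset, degIn_union _ (by simpa using hal), hsingle]
    have ih := ih hla hul.1
    unfold toppleList at ih ⊢
    rw [List.foldl_append, List.foldl_cons, List.foldl_nil]
    simp only [topple, hu, hul.2, if_false, ih]
    split_ifs <;> omega

theorem DharSeq.exists_isBurningRank {n : ℕ} {F : Ferrers n} {c : Fin (n + 1) → ℕ}
    {l : List (Fin (n + 1))} (h : F.DharSeq c l) : ∃ r, F.IsBurningRank c r := by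
  obtain ⟨hlen, hnd, hhead, hun⟩ := h
  have hmem : ∀ v, v ∈ l := by
    intro v
    have : l.toFinset = Finset.univ := by
      rw [← Finset.card_eq_iff_eq_univ, List.toFinset_card_of_nodup hnd, hlen, Fintype.card_fin]
    simpa using this.ge (Finset.mem_univ v)
  have hidx : ∀ v, l.idxOf v < l.length := fun v => List.idxOf_lt_length_of_mem (hmem v)
  have h0 : l.idxOf 0 = 0 := by
    cases l with
    | nil => simp at hhead
    | cons a l => simp only [List.head?_cons, Option.some.injEq] at hhead; simp [hhead]
  have hinj : ∀ u v, l.idxOf u = l.idxOf v → u = v := fun u v huv =>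
    (List.idxOf_inj (hmem u)).1 huv
  have hpos : ∀ v, v ≠ 0 → 0 < l.idxOf v := fun v hv =>
    Nat.pos_of_ne_zero fun h => hv (hinj v 0 (h.trans h0.symm))
  refine ⟨fun v => l.idxOf v, ?_, fun v hv => ?_, fun v hv => ?_⟩
  · intro u v huv heq
    obtain rfl := hinj u v heq
    rcases huv with huv | huv <;> exact absurd huv.2.2 (lt_irrefl _)
  · simpa [h0] using hpos v hv
  · have key := hun (l.idxOf v) (hidx v) (hpos v hv)
    have hget : l.get ⟨l.idxOf v, hidx v⟩ = v := by simp
    have htake : ∀ w, w ∈ l.take (l.idxOf v) ↔ l.idxOf w < l.idxOf v := by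
      intro w
      rw [List.mem_take_iff_idxOf_lt (hmem w)]
    rw [hget, toppleList_of_not_mem F c hv _ (hnd.sublist (List.take_sublist _ _))
      (by rw [htake]; exact lt_irrefl _)] at key
    refine key.trans (Nat.add_le_add_left (F.degIn_mono fun w hw _ => (htake w).1 hw) _)

theorem IsBurningRank.exists_dharSeq {n : ℕ} {F : Ferrers n} {c r : Fin (n + 1) → ℕ}
    (h : F.IsBurningRank c r) : ∃ l, F.DharSeq c l := by
  let le : Fin (n + 1) → Fin (n + 1) → Bool := fun u v => decide (r u ≤ r v)
  let l := (List.finRange (n + 1)).mergeSort le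
  have hperm : l.Perm (List.finRange (n + 1)) := List.mergeSort_perm _ _
  have hnd : l.Nodup := hperm.nodup_iff.2 (List.nodup_finRange _)
  have hlen : l.length = n + 1 := by rw [hperm.length_eq, List.length_finRange]
  have hmem : ∀ v, v ∈ l := fun v => hperm.mem_iff.2 (List.mem_finRange v)
  have hsort : ∀ i j (hi : i < l.length) (hj : j < l.length), i < j → r l[i] ≤ r l[j] := by
    have : l.Pairwise (fun u v => le u v) :=
      List.pairwise_mergeSort (le := le) (by simp only [le, decide_eq_true_eq]; omega)
        (by simp only [le, Bool.or_eq_true, decide_eq_true_eq]; omega) _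
    rw [List.pairwise_iff_getElem] at this
    simpa [le] using this
  have hlt : 0 < l.length := by omega
  have hhead : l[0] = 0 := by
    obtain ⟨i, hi, h0⟩ := List.getElem_of_mem (hmem 0)
    by_contra hne
    rcases Nat.eq_zero_or_pos i with rfl | hpos
    · exact hne h0
    · have h1 := hsort 0 i hlt hi hpos
      have h2 := h.zero_lt _ hne
      rw [h0] at h1
      omega
  refine ⟨l, hlen, hnd, ?_, fun i hi hpos => ?_⟩
  · rw [List.head?_eq_getElem?, List.getElem?_eq_getElem hlt, hhead]
  · have hi0 : l[i] ≠ 0 := by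
      rw [← hhead]
      intro heq
      have := (hnd.getElem_inj_iff).1 heq
      omega
    have hnot : l[i] ∉ l.take i := by
      intro hm
      obtain ⟨j, hj, hji⟩ := List.getElem_of_mem hm
      rw [List.getElem_take] at hji
      have := (hnd.getElem_inj_iff).1 hji
      rw [List.length_take] at hj
      omega
    rw [List.get_eq_getElem]
    simp only
    rw [toppleList_of_not_mem F c hi0 _ (hnd.sublist (List.take_sublist _ _)) hnot]
    refine (h.unstable _ hi0).trans (Nat.add_le_add_left (F.degIn_mono fun w hw _ => ?_) _)
    obtain ⟨j, hj, rfl⟩ := List.getElem_of_mem (hmem w)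
    have hji : j < i := by
      by_contra hge
      simp only [Set.mem_ofPred_eq] at hw
      rcases Nat.lt_or_eq_of_le (not_lt.1 hge) with h1 | rfl
      · exact absurd (hsort i j hi hj h1) (not_le.2 hw)
      · exact lt_irrefl _ hw
    exact List.mem_take_iff_getElem.2 ⟨j, by omega, rfl⟩

/-- The set of vertices toppled before step `k` of the canonical toppling. -/
def toppledBefore {n : ℕ} (F : Ferrers n) (c : Fin (n + 1) → ℕ) (k : ℕ) : Set (Fin (n + 1)) :=
  {v | ∃ i < k, v ∈ F.canonTop c i}

theorem toppledBefore_succ {n : ℕ} (F : Ferrers n) (c : Fin (n + 1) → ℕ) (k : ℕ) :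
    F.toppledBefore c (k + 1) = F.toppledBefore c k ∪ F.canonTop c k := by
  ext v
  simp only [toppledBefore, Set.mem_union, Set.mem_ofPred_eq, Nat.lt_succ_iff_lt_or_eq]
  constructor
  · rintro ⟨i, hi | rfl, hv⟩
    exacts [Or.inl ⟨i, hi, hv⟩, Or.inr hv]
  · rintro (⟨i, hi, hv⟩ | hv)
    exacts [⟨i, Or.inl hi, hv⟩, ⟨k, Or.inr rfl, hv⟩]

theorem mem_canonTop_succ {n : ℕ} (F : Ferrers n) (c : Fin (n + 1) → ℕ) (k : ℕ)
    (v : Fin (n + 1)) : v ∈ F.canonTop c (k + 1) ↔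
      v ≠ 0 ∧ (k % 2 = 0 ↔ v ∉ F.rows) ∧ F.deg v ≤ F.canonConfig c (k + 1) v := by
  simp only [canonTop, canonConfig, canonAux, Set.mem_ofPred_eq]
  split_ifs with h <;> simp [h]

theorem canonConfig_succ {n : ℕ} (F : Ferrers n) (c : Fin (n + 1) → ℕ) (k : ℕ)
    {v : Fin (n + 1)} (hv : v ≠ 0) : F.canonConfig c (k + 1) v =
      F.canonConfig c k v + F.degIn (F.canonTop c k) v -
        if v ∈ F.canonTop c k then F.deg v else 0 := by
  simp only [canonConfig, canonAux, toppleSet, hv, if_false]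
  rfl

theorem even_iff_mem_rows_of_mem_canonTop {n : ℕ} {F : Ferrers n} {c : Fin (n + 1) → ℕ} {k : ℕ}
    {v : Fin (n + 1)} (h : v ∈ F.canonTop c k) : k % 2 = 0 ↔ v ∈ F.rows := by
  cases k with
  | zero =>
    obtain rfl : v = 0 := h
    simp [F.zero_mem]
  | succ k =>
    have := ((F.mem_canonTop_succ c k v).1 h).2.1
    by_cases hv : v ∈ F.rows <;> simp only [hv, not_true, not_false_iff, iff_false, iff_true] at * <;>
      omega

theorem deg_le_canonConfig {n : ℕ} {F : Ferrers n} {c : Fin (n + 1) → ℕ} {k : ℕ}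
    {v : Fin (n + 1)} (h : v ∈ F.canonTop c k) (hv : v ≠ 0) : F.deg v ≤ F.canonConfig c k v := by
  cases k with
  | zero => exact absurd h hv
  | succ k => exact ((F.mem_canonTop_succ c k v).1 h).2.2

/-- Starting from a stable configuration, each vertex is toppled at most once, and the heights
along the canonical toppling are determined by the toppled vertices. -/
theorem Stable.canon_invariant {n : ℕ} {F : Ferrers n} {c : Fin (n + 1) → ℕ} (hc : F.Stable c)
    (k : ℕ) :
    (∀ v, v ≠ 0 → F.canonConfig c k v + (if v ∈ F.toppledBefore c k then F.deg v else 0) =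
      c v + F.degIn (F.toppledBefore c k) v) ∧
    Disjoint (F.toppledBefore c k) (F.canonTop c k) := by
  induction k with
  | zero =>
    have hempty : F.toppledBefore c 0 = ∅ := by
      ext v
      simp [toppledBefore]
    rw [hempty]
    exact ⟨fun v _ => by simp [degIn, canonConfig, canonAux], Set.empty_disjoint _⟩
  | succ k ih =>
    obtain ⟨ih, hdisj⟩ := ih
    have hconfig : ∀ v, v ≠ 0 → F.canonConfig c (k + 1) v +
        (if v ∈ F.toppledBefore c (k + 1) then F.deg v else 0) =
        c v + F.degIn (F.toppledBefore c (k + 1)) v := by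
      intro v hv
      have hih := ih v hv
      rw [toppledBefore_succ, degIn_union F hdisj, canonConfig_succ F c k hv]
      by_cases hk : v ∈ F.canonTop c k
      · have hnot : v ∉ F.toppledBefore c k := fun h => Set.disjoint_left.1 hdisj h hk
        have hdeg := deg_le_canonConfig hk hv
        simp only [hk, hnot, Set.mem_union, or_true, if_true, if_false] at hih ⊢
        omega
      · simp only [hk, Set.mem_union, or_false, if_false] at hih ⊢
        omega
    refine ⟨hconfig, Set.disjoint_left.2 fun v hv hk => ?_⟩
    obtain ⟨hv0, -, hdeg⟩ := (F.mem_canonTop_succ c k v).1 hk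
    have h1 := hconfig v hv0
    have h2 := F.degIn_le_deg (F.toppledBefore c (k + 1)) v
    have h3 := hc v hv0
    rw [if_pos hv] at h1
    omega

theorem Stable.mem_canonTop_succ_iff {n : ℕ} {F : Ferrers n} {c : Fin (n + 1) → ℕ}
    (hc : F.Stable c) (k : ℕ) (v : Fin (n + 1)) : v ∈ F.canonTop c (k + 1) ↔
      v ≠ 0 ∧ (k % 2 = 0 ↔ v ∉ F.rows) ∧ v ∉ F.toppledBefore c (k + 1) ∧
        F.deg v ≤ c v + F.degIn (F.toppledBefore c (k + 1)) v := by
  obtain ⟨hconfig, hdisj⟩ := hc.canon_invariant (k + 1)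
  constructor
  · intro h
    have hnot : v ∉ F.toppledBefore c (k + 1) := fun h' => Set.disjoint_left.1 hdisj h' h
    obtain ⟨hv, hpar, hdeg⟩ := (F.mem_canonTop_succ c k v).1 h
    have h1 := hconfig v hv
    rw [if_neg hnot] at h1
    exact ⟨hv, hpar, hnot, by omega⟩
  · rintro ⟨hv, hpar, hnot, hdeg⟩
    have h1 := hconfig v hv
    rw [if_neg hnot] at h1
    exact (F.mem_canonTop_succ c k v).2 ⟨hv, hpar, by omega⟩

theorem Stable.canonTop_index_unique {n : ℕ} {F : Ferrers n} {c : Fin (n + 1) → ℕ}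
    (hc : F.Stable c) {i j : ℕ} {v : Fin (n + 1)} (hi : v ∈ F.canonTop c i)
    (hj : v ∈ F.canonTop c j) : i = j := by
  rcases lt_trichotomy i j with h | h | h
  · exact absurd hj (Set.disjoint_left.1 (hc.canon_invariant j).2 ⟨i, h, hi⟩)
  · exact h
  · exact absurd hi (Set.disjoint_left.1 (hc.canon_invariant i).2 ⟨j, h, hj⟩)

/-- The canonical toppling of a recurrent configuration reaches every vertex. -/
theorem IsBurningRank.exists_mem_canonTop {n : ℕ} {F : Ferrers n} {c r : Fin (n + 1) → ℕ}
    (h : F.IsBurningRank c r) (hc : F.Stable c) (v : Fin (n + 1)) :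
    ∃ k, v ∈ F.canonTop c k := by
  induction hm : r v using Nat.strong_induction_on generalizing v with
  | _ m ih =>
    subst hm
    by_cases hv : v = 0
    · exact ⟨0, hv⟩
    have hidx : ∀ w, ∃ k, r w < r v → w ∈ F.canonTop c k := by
      intro w
      by_cases hw : r w < r v
      · exact (ih _ hw w rfl).imp fun _ hk _ => hk
      · exact ⟨0, fun h => absurd h hw⟩
    choose f hf using hidx
    obtain ⟨k, hpar, hk⟩ : ∃ k, (k % 2 = 0 ↔ v ∉ F.rows) ∧ ∀ w, f w ≤ k := by
      have hle : ∀ w, f w ≤ ∑ u, f u := fun w =>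
        Finset.single_le_sum (fun _ _ => Nat.zero_le _) (Finset.mem_univ w)
      by_cases hrow : v ∈ F.rows
      · exact ⟨2 * (∑ u, f u) + 1, by simp only [hrow, not_true, iff_false]; omega,
          fun w => by have := hle w; omega⟩
      · exact ⟨2 * (∑ u, f u), by simp [hrow], fun w => by have := hle w; omega⟩
    by_cases hbefore : v ∈ F.toppledBefore c (k + 1)
    · obtain ⟨i, -, hi⟩ := hbefore
      exact ⟨i, hi⟩
    · refine ⟨k + 1, (hc.mem_canonTop_succ_iff k v).2 ⟨hv, hpar, hbefore, ?_⟩⟩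
      refine (h.unstable v hv).trans (Nat.add_le_add_left (F.degIn_mono fun w hw _ => ?_) _)
      exact ⟨f w, Nat.lt_succ_of_le (hk w), hf w hw⟩

theorem Stable.bIdx_eq {n : ℕ} {F : Ferrers n} {c : Fin (n + 1) → ℕ} (hc : F.Stable c) {k : ℕ}
    {v : Fin (n + 1)} (h : v ∈ F.canonTop c k) : F.bIdx c v = k :=
  hc.canonTop_index_unique (Nat.sInf_mem (s := {k | v ∈ F.canonTop c k}) ⟨k, h⟩) h

/-- When the canonical toppling of `c` reaches every vertex, its block index is a burning rank. -/
theorem Stable.isBurningRank_bIdx {n : ℕ} {F : Ferrers n} {c : Fin (n + 1) → ℕ} (hc : F.Stable c)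
    (hmem : ∀ v, v ∈ F.canonTop c (F.bIdx c v)) : F.IsBurningRank c (F.bIdx c) := by
  have hzero : F.bIdx c 0 = 0 := hc.bIdx_eq (rfl : (0 : Fin (n + 1)) ∈ F.canonTop c 0)
  have hpos : ∀ v, v ≠ 0 → 0 < F.bIdx c v := by
    intro v hv
    refine Nat.pos_of_ne_zero fun h => hv ?_
    have := hmem v
    rwa [h] at this
  refine ⟨fun u v huv heq => ?_, fun v hv => by rw [hzero]; exact hpos v hv, fun v hv => ?_⟩
  · have hu := even_iff_mem_rows_of_mem_canonTop (hmem u)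
    have hv := even_iff_mem_rows_of_mem_canonTop (hmem v)
    rw [heq] at hu
    rcases huv with huv | huv
    exacts [huv.2.1 (hv.1 (hu.2 huv.1)), huv.2.1 (hu.1 (hv.2 huv.1))]
  · have hv' := hmem v
    obtain ⟨k, hk⟩ := Nat.exists_eq_add_of_lt (hpos v hv)
    rw [zero_add] at hk
    rw [hk] at hv' ⊢
    refine ((hc.mem_canonTop_succ_iff k v).1 hv').2.2.2.trans
      (Nat.add_le_add_left (F.degIn_mono fun w hw _ => ?_) _)
    obtain ⟨i, hi, hw⟩ := hw
    rw [Set.mem_ofPred_eq, hc.bIdx_eq hw]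
    exact hi

end Ferrers


/-- Given a recurrent configuration `c'` on `G(F)`, the
configuration `c = minrec c'` defined by
`c_j = |{ℓ ∈ Vᵏ : j < ℓ, k > i}|` if `j ∈ Uⁱ` and
`c_j = |{ℓ ∈ Uᵏ : ℓ < j, k ≥ i}|` if `j ∈ Vⁱ`
is a minimal recurrent configuration with the same canonical toppling as `c'`.
(Recall `Uⁱ = canonTop c' (2i)` and `Vⁱ = canonTop c' (2i - 1)`.) -/
theorem minrec_is_minimal_recurrent {n : ℕ} (F : Ferrers n)
    (c' c : Fin (n + 1) → ℕ) (hc' : F.Recurrent c') (hc0 : c 0 = 0)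
    (hU : ∀ i : ℕ, ∀ j : Fin (n + 1), j ∈ F.canonTop c' (2 * i) → j ≠ 0 →
      c j = {l : Fin (n + 1) | j < l ∧ ∃ k, i ≤ k ∧ l ∈ F.canonTop c' (2 * k + 1)}.ncard)
    (hV : ∀ i : ℕ, ∀ j : Fin (n + 1), j ∈ F.canonTop c' (2 * i + 1) →
      c j = {l : Fin (n + 1) | l < j ∧ ∃ k, i + 1 ≤ k ∧ l ∈ F.canonTop c' (2 * k)}.ncard) :
    F.RecMin c ∧ ∀ k, F.canonTop c k = F.canonTop c' k := by
  obtain ⟨-, hst, l, hl⟩ := hc'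
  obtain ⟨ρ, hρ⟩ := hl.exists_isBurningRank
  set r := F.bIdx c'
  have hmem : ∀ v, v ∈ F.canonTop c' (r v) := fun v =>
    Nat.sInf_mem (s := {k | v ∈ F.canonTop c' k}) (hρ.exists_mem_canonTop hst v)
  have hidx : ∀ {v k}, v ∈ F.canonTop c' k → r v = k := fun h => hst.bIdx_eq h
  have hr : F.IsBurningRank c' r := hst.isBurningRank_bIdx hmem
  have hpar : ∀ v, r v % 2 = 0 ↔ v ∈ F.rows := fun v =>
    Ferrers.even_iff_mem_rows_of_mem_canonTop (hmem v)
  have hc : ∀ v, v ≠ 0 → c v = F.degIn {w | r v < r w} v := by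
    intro v hv
    have hvm := hmem v
    by_cases hrow : v ∈ F.rows
    · obtain ⟨i, hi⟩ : ∃ i, r v = 2 * i := ⟨r v / 2, by have := (hpar v).2 hrow; omega⟩
      rw [hi] at hvm
      rw [hU i v hvm hv, Ferrers.degIn]
      congr 1
      ext w
      simp only [Set.mem_ofPred_eq]
      constructor
      · rintro ⟨hlt, k, hk, hw⟩
        have hwk := hidx hw
        exact ⟨by omega, Or.inr ⟨hrow, fun h => by have := (hpar w).2 h; omega, hlt⟩⟩
      · rintro ⟨hlt, h | h⟩
        · exact absurd hrow h.2.1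
        · have hodd : ¬ r w % 2 = 0 := fun h' => h.2.1 ((hpar w).1 h')
          refine ⟨h.2.2, r w / 2, by omega, ?_⟩
          convert hmem w using 2
          omega
    · obtain ⟨i, hi⟩ : ∃ i, r v = 2 * i + 1 :=
        ⟨r v / 2, by have := mt (hpar v).1 hrow; omega⟩
      rw [hi] at hvm
      rw [hV i v hvm, Ferrers.degIn]
      congr 1
      ext w
      simp only [Set.mem_ofPred_eq]
      constructor
      · rintro ⟨hlt, k, hk, hw⟩
        have hwk := hidx hw
        exact ⟨by omega, Or.inl ⟨(hpar w).1 (by omega), hrow, hlt⟩⟩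
      · rintro ⟨hlt, h | h⟩
        · have heven : r w % 2 = 0 := (hpar w).2 h.1
          refine ⟨h.2.2, r w / 2, by omega, ?_⟩
          convert hmem w using 2
          omega
        · exact absurd h.1 hrow
  have hsplit := Ferrers.degIn_lt_add_degIn_gt hr.ne_of_adj
  have hcr : F.IsBurningRank c r :=
    ⟨hr.ne_of_adj, hr.zero_lt, fun v hv => by rw [hc v hv, ← hsplit v, add_comm]⟩
  have hcst : F.Stable c := by
    intro v hv
    have h1 := hr.unstable v hv
    have h2 := hst v hv
    rw [hc v hv, ← hsplit v]
    omega
  refine ⟨⟨⟨hc0, hcst, hcr.exists_dharSeq⟩, ?_⟩, ?_⟩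
  · rintro d ⟨-, -, l', hl'⟩
    obtain ⟨s, hs⟩ := hl'.exists_isBurningRank
    have h1 := hs.sum_deg_le
    rw [Ferrers.sum_deg_eq hc0 hr.ne_of_adj hr.zero_lt hc] at h1
    omega
  · intro k
    induction k using Nat.strong_induction_on with
    | _ k ih =>
      cases k with
      | zero => rfl
      | succ k =>
        have hbefore : F.toppledBefore c (k + 1) = {w | r w < k + 1} := by
          ext w
          refine ⟨fun ⟨i, hi, hw⟩ => ?_, fun hw => ⟨r w, hw, ?_⟩⟩
          · rw [ih i hi] at hw
            rwa [Set.mem_ofPred_eq, hidx hw]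
          · rw [ih _ hw]
            exact hmem w
        have hbefore' : F.toppledBefore c' (k + 1) = {w | r w < k + 1} := by
          ext w
          refine ⟨fun ⟨i, hi, hw⟩ => ?_, fun hw => ⟨r w, hw, hmem w⟩⟩
          rwa [Set.mem_ofPred_eq, hidx hw]
        ext v
        rw [hst.mem_canonTop_succ_iff, hcst.mem_canonTop_succ_iff, hbefore, hbefore']
        refine and_congr_right fun hv => and_congr_right fun hside => and_congr_right fun hnot => ?_
        simp only [Set.mem_ofPred_eq, not_lt] at hnot
        have hsp := hsplit v
        have hcv := hc v hv
        constructor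
        · intro hle
          have hge : F.degIn {w | r w < r v} v ≤ F.degIn {w | r w < k + 1} v := by omega
          have hmono : F.degIn {w | r w < k + 1} v ≤ F.degIn {w | r w < r v} v :=
            F.degIn_mono fun w (hw : r w < k + 1) _ => show r w < r v by omega
          have := hr.unstable v hv
          omega
        · intro hle
          have : v ∈ F.canonTop c' (k + 1) := by
            rw [hst.mem_canonTop_succ_iff, hbefore']
            exact ⟨hv, hside, not_lt.2 hnot, hle⟩
          rw [← hidx this]
          omega
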